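/- arXiv:1405.6792 — 3 statements merged into one kernel-verified Lean document; each statement's English description precedes it below -/
import Mathlib

section
/- Let X be an n×p real matrix with columns X_1,…,X_p, let β* ∈ ℝ^p have support contained in a set A_0 ⊆ {1,…,p}, and let y = Xβ* + ε for some ε ∈ ℝ^n. Assume the Gram matrix X_{A_0}ᵀX_{A_0} of the columns in A_0 is invertible, and that there exists η with 0 ≤ η < 1 such that for every j ∉ A_0 and every vector τ ∈ ℝ^{A_0} with ‖τ‖_∞ ≤ 1 one has |X_jᵀ X_{A_0} (X_{A_0}ᵀ X_{A_0})^{-1} τ| ≤ η. Set λ_ε := max_{1≤j≤p} |⟨ε, X_j⟩| and let λ > 0 satisfy λ ≥ λ_ε (1+η)/(1−η). Then every minimizer β̂(λ) of the Lasso objective β ↦ (1/2)‖y − Xβ‖₂² + λ‖β‖₁ over ℝ^p satisfies β̂(λ)_j = 0 for all j ∉ A_0 (i.e., the Lasso active set at λ is contained in A_0). -/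
open scoped BigOperators

noncomputable section

/-- Euclidean inner product on `Fin n → ℝ`. -/
def ip {n : ℕ} (a b : Fin n → ℝ) : ℝ := ∑ i, a i * b i

/-- Squared Euclidean norm on `Fin n → ℝ`. -/
def sqnorm {n : ℕ} (a : Fin n → ℝ) : ℝ := ∑ i, (a i) ^ 2

theorem aux_ip_sum {n p : ℕ} (X : Matrix (Fin n) (Fin p) ℝ) (v : Fin p → ℝ) (u : Fin n → ℝ) :
    ip (fun i => ∑ j, v j * X i j) u = ∑ j, v j * ip (fun i => X i j) u := by
  simp only [ip, Finset.sum_mul, Finset.mul_sum]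
  rw [Finset.sum_comm]
  exact Finset.sum_congr rfl fun j _ => Finset.sum_congr rfl fun i _ => by ring

theorem aux_ip_comm {n : ℕ} (a b : Fin n → ℝ) : ip a b = ip b a := by
  simp only [ip, mul_comm]

theorem aux_split {p : ℕ} (A : Finset (Fin p)) (f : Fin p → ℝ) :
    ∑ j, f j = ∑ a : A, f a.1 + ∑ j ∈ Aᶜ, f j := by
  rw [Finset.sum_coe_sort A f, Finset.sum_add_sum_compl]

/-- If the design satisfies the irrepresentable condition with constant `η < 1` relative to a
set `A₀` containing the support of `β*`, and `λ ≥ λ_ε (1+η)/(1−η)` where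
`λ_ε = max_j |⟨ε, X_j⟩|`, then every Lasso minimizer at `λ` has its active set inside `A₀`. -/
theorem lasso_active_set_subset_of_irrepresentable
    {n p : ℕ} (hp : 0 < p)
    (X : Matrix (Fin n) (Fin p) ℝ)
    (βstar : Fin p → ℝ) (A0 : Finset (Fin p))
    (hsupp : ∀ j, βstar j ≠ 0 → j ∈ A0)
    (ε : Fin n → ℝ)
    (y : Fin n → ℝ) (hy : y = fun i => (∑ j, βstar j * X i j) + ε i)
    (G : Matrix A0 A0 ℝ)
    (hG : G = fun a b => ip (fun i => X i a.1) (fun i => X i b.1))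
    (hGinv : IsUnit G.det)
    (η : ℝ) (hη0 : 0 ≤ η) (hη1 : η < 1)
    (hirr : ∀ j ∉ A0, ∀ τ : A0 → ℝ, (∀ a, |τ a| ≤ 1) →
      |∑ a : A0, ip (fun i => X i j) (fun i => X i a.1) * (G⁻¹).mulVec τ a| ≤ η)
    (lamε : ℝ)
    (hlamε : lamε = Finset.univ.sup'
      (⟨⟨0, hp⟩, Finset.mem_univ _⟩ : (Finset.univ : Finset (Fin p)).Nonempty)
      (fun j => |ip ε (fun i => X i j)|))
    (lam : ℝ) (hlam : 0 < lam) (hlam2 : lamε * (1 + η) / (1 - η) ≤ lam)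
    (βhat : Fin p → ℝ)
    (hmin : ∀ β : Fin p → ℝ,
      (1 / 2) * sqnorm (fun i => y i - ∑ j, βhat j * X i j) + lam * ∑ j, |βhat j|
        ≤ (1 / 2) * sqnorm (fun i => y i - ∑ j, β j * X i j) + lam * ∑ j, |β j|) :
    ∀ j ∉ A0, βhat j = 0 := by
  set w : A0 → ℝ := fun a => ∑ j ∈ A0ᶜ, βhat j * ip (fun i => X i j) (fun i => X i a.1) with hw
  set c : A0 → ℝ := (G⁻¹).mulVec w with hc
  set b : ℝ := ∑ j ∈ A0ᶜ, |βhat j| with hb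
  have hGc : G.mulVec c = w := by
    rw [hc, Matrix.mulVec_mulVec, Matrix.mul_nonsing_inv G hGinv, Matrix.one_mulVec]
  have hGT : (G⁻¹).transpose = G⁻¹ := by
    rw [Matrix.transpose_nonsing_inv]
    congr 1
    ext a d
    rw [hG]
    exact aux_ip_comm _ _
  -- l1 bound on c
  have hC : ∑ a, |c a| ≤ η * b := by
    set τ : A0 → ℝ := fun a => SignType.sign (c a) with hτ
    have hτ1 : ∀ a, |τ a| ≤ 1 := by
      intro a
      simp only [hτ]
      rcases SignType.sign (c a) with _ | _ | _ <;> simp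
    have h1 : ∑ a, |c a| = ∑ a, (G⁻¹).mulVec τ a * w a := by
      have : ∑ a, |c a| = τ ⬝ᵥ (G⁻¹).mulVec w := by
        simp only [dotProduct]
        exact Finset.sum_congr rfl fun a _ => by
          rw [← hc]; exact (sign_mul_self (c a)).symm
      rw [this, Matrix.dotProduct_mulVec, ← Matrix.mulVec_transpose, hGT]
      rfl
    have h2 : ∑ a, (G⁻¹).mulVec τ a * w a = ∑ j ∈ A0ᶜ, βhat j *
        ∑ a : A0, ip (fun i => X i j) (fun i => X i a.1) * (G⁻¹).mulVec τ a := by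
      simp only [hw, Finset.mul_sum]
      rw [Finset.sum_comm]
      exact Finset.sum_congr rfl fun j _ => Finset.sum_congr rfl fun i _ => by ring
    rw [h1, h2, hb, Finset.mul_sum]
    refine Finset.sum_le_sum fun j hj => ?_
    refine (le_abs_self _).trans ?_
    rw [abs_mul, mul_comm]
    exact mul_le_mul_of_nonneg_right (hirr j (by simpa using hj) τ hτ1) (abs_nonneg _)
  set h : Fin p → ℝ := fun j => if hj : j ∈ A0 then c ⟨j, hj⟩ else -βhat j with hh
  have hin : ∀ a : A0, h a.1 = c a := fun a => by simp [hh]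
  have hout : ∀ j ∉ A0, h j = -βhat j := fun j hj => by simp [hh, hj]
  set u : Fin n → ℝ := fun i => ∑ j, (-h j) * X i j with hu
  have hq : ∀ j ∈ A0, ip (fun i => X i j) u = 0 := by
    intro j hj
    rw [aux_ip_comm, hu, aux_ip_sum, aux_split A0]
    have e1 := congrFun hGc ⟨j, hj⟩
    simp only [Matrix.mulVec, dotProduct, hG, hw] at e1
    have e2 : ∑ a : A0, -h a.1 * ip (fun i => X i a.1) (fun i => X i j) =
        - ∑ a : A0, ip (fun i => X i j) (fun i => X i a.1) * c a := by
      rw [← Finset.sum_neg_distrib]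
      refine Finset.sum_congr rfl fun a _ => ?_
      rw [hin, aux_ip_comm]; ring
    rw [e2, e1, neg_add_eq_zero]
    refine Finset.sum_congr rfl fun k hk => ?_
    rw [hout k (by simpa using hk), neg_neg]
  have hl : ∀ j, |ip ε (fun i => X i j)| ≤ lamε := by
    intro j
    rw [hlamε]
    exact Finset.le_sup' (fun j => |ip ε (fun i => X i j)|) (Finset.mem_univ j)
  have hhsum : ∑ j, |h j| = ∑ a, |c a| + b := by
    rw [aux_split A0]
    congr 1
    · exact Finset.sum_congr rfl fun a _ => by rw [hin]
    · exact Finset.sum_congr rfl fun k hk => by rw [hout k (by simpa using hk), abs_neg]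
  have hεu : ip ε u ≤ lamε * (∑ a, |c a| + b) := by
    rw [← hhsum, aux_ip_comm, hu, aux_ip_sum, Finset.mul_sum]
    refine Finset.sum_le_sum fun j _ => ?_
    refine (le_abs_self _).trans ?_
    rw [abs_mul, mul_comm, abs_neg, aux_ip_comm]
    exact mul_le_mul_of_nonneg_right (hl j) (abs_nonneg _)
  have hpen : ∑ j, |βhat j + h j| ≤ ∑ j, |βhat j| - b + ∑ a, |c a| := by
    rw [aux_split A0, aux_split A0 (fun j => |βhat j|)]
    have e1 : ∑ j ∈ A0ᶜ, |βhat j + h j| = 0 :=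
      Finset.sum_eq_zero fun k hk => by rw [hout k (by simpa using hk)]; simp
    have e2 : ∑ a : A0, |βhat a.1 + h a.1| ≤ ∑ a : A0, |βhat a.1| + ∑ a, |c a| := by
      rw [← Finset.sum_add_distrib]
      exact Finset.sum_le_sum fun a _ => by rw [hin]; exact abs_add_le _ _
    linarith
  set r : Fin n → ℝ := fun i => y i - ∑ j, βhat j * X i j with hr
  have hru : ip r u = ip ε u - sqnorm u := by
    have e0 : ip r u = ip ε u + ip (fun i => ∑ j, (βstar j - βhat j) * X i j) u := by
      simp only [ip]
      rw [← Finset.sum_add_distrib]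
      refine Finset.sum_congr rfl fun i _ => ?_
      simp only [hr, hy, sub_mul, Finset.sum_sub_distrib]
      ring
    have e1 : sqnorm u = ip (fun i => ∑ j, (-h j) * X i j) u := by
      simp only [sqnorm, ip, sq, hu]
    rw [e0, e1, aux_ip_sum, aux_ip_sum, sub_eq_add_neg, ← Finset.sum_neg_distrib]
    congr 1
    refine Finset.sum_congr rfl fun j _ => ?_
    by_cases hj : j ∈ A0
    · rw [hq j hj]; ring
    · have : βstar j = 0 := by
        by_contra hne
        exact hj (hsupp j hne)
      rw [hout j hj, this]; ring
  have hexp : sqnorm (fun i => y i - ∑ j, (βhat j + h j) * X i j) =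
      sqnorm r + 2 * ip r u + sqnorm u := by
    simp only [sqnorm, ip]
    rw [Finset.mul_sum, ← Finset.sum_add_distrib, ← Finset.sum_add_distrib]
    refine Finset.sum_congr rfl fun i _ => ?_
    simp only [hr, hu, add_mul, neg_mul, Finset.sum_add_distrib, Finset.sum_neg_distrib]
    ring
  have hm := hmin (fun j => βhat j + h j)
  rw [hexp, hru] at hm
  have hb0 : 0 ≤ b := Finset.sum_nonneg fun _ _ => abs_nonneg _
  have hl0 : 0 ≤ lamε := (abs_nonneg _).trans (hl ⟨0, hp⟩)
  have hlam3 : lamε * (1 + η) ≤ lam * (1 - η) := by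
    rwa [div_le_iff₀ (by linarith)] at hlam2
  have k1 : lam * ∑ j, |βhat j + h j| ≤ lam * (∑ j, |βhat j| - b + η * b) :=
    mul_le_mul_of_nonneg_left (by linarith) hlam.le
  have k2 : ip ε u ≤ lam * (1 - η) * b := by
    have : lamε * (∑ a, |c a| + b) ≤ lamε * (η * b + b) :=
      mul_le_mul_of_nonneg_left (by linarith) hl0
    have := mul_le_mul_of_nonneg_right hlam3 hb0
    nlinarith
  have k3 : (1 / 2) * sqnorm u ≤ ip ε u - lam * (1 - η) * b := by nlinarith
  have hu0 : u = 0 := by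
    have hs : ∑ i, (u i) ^ 2 = 0 :=
      le_antisymm (by change sqnorm u ≤ 0; linarith) (Finset.sum_nonneg fun _ _ => sq_nonneg _)
    rw [Finset.sum_eq_zero_iff_of_nonneg (fun _ _ => sq_nonneg _)] at hs
    funext i
    simpa using hs i (Finset.mem_univ i)
  have hbz : b = 0 := by
    have e : ip ε u = 0 := by rw [hu0]; simp [ip]
    have e2 : sqnorm u = 0 := by rw [hu0]; simp [sqnorm]
    rw [e, e2] at k3
    have : 0 < lam * (1 - η) := mul_pos hlam (by linarith)
    nlinarith
  intro j hj
  rw [hb, Finset.sum_eq_zero_iff_of_nonneg (fun _ _ => abs_nonneg _)] at hbz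
  exact abs_eq_zero.mp (hbz j (by simpa using hj))
end
end

section
/- Let X be an n×p real matrix with orthonormal columns (XᵀX = I_p), let y ∈ ℝ^n, σ > 0, and set z_j := ⟨y, X_j⟩. Assume the values |z_1|,…,|z_p| are pairwise distinct. For 1 ≤ k ≤ p, let λ̂_k be the k-th largest value among |z_1|,…,|z_p| and let Â_k ⊆ {1,…,p} be the set of indices of the k largest values of |z_j| (with Â_0 := ∅). Then for every 1 ≤ k ≤ p−1, the covariance test statistic satisfies T_k := T(Â_{k−1}, λ̂_{k+1}) = (λ̂_k² − λ̂_k λ̂_{k+1}) / σ². -/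
open scoped BigOperators

noncomputable section

lemma aux_one (l z β : ℝ) (hl : 0 ≤ l)
    (h : ∀ t : ℝ, (1/2) * β^2 - β * z + l * |β| ≤ (1/2) * t^2 - t * z + l * |t|) :
    β^2 - 2 * (β * z) + l * |β| = if |z| ≤ l then 0 else l * |z| - z^2 := by
  split_ifs with hz
  · have h0 := h 0
    have h1 : β * z ≤ |β| * |z| := by rw [← abs_mul]; exact le_abs_self _
    have h2 : |β| * |z| ≤ |β| * l := mul_le_mul_of_nonneg_left hz (abs_nonneg _)
    simp only [abs_zero] at h0
    have h3 : β ^ 2 ≤ 0 := by nlinarith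
    have : β = 0 := by nlinarith [pow_eq_zero_iff (two_ne_zero) |>.1 (le_antisymm h3 (sq_nonneg β))]
    simp [this]
  · push Not at hz
    rcases le_total 0 z with h0 | h0
    · rw [abs_of_nonneg h0] at hz ⊢
      have h1 := h (z - l)
      rw [abs_of_nonneg (by linarith : (0:ℝ) ≤ z - l)] at h1
      have h2 := mul_le_mul_of_nonneg_left (le_abs_self β) hl
      have h3 : (β - (z - l))^2 ≤ 0 := by nlinarith
      have h4 : β = z - l := by
        have := pow_eq_zero_iff (two_ne_zero) |>.1 (le_antisymm h3 (sq_nonneg _))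
        linarith
      rw [h4, abs_of_nonneg (by linarith : (0:ℝ) ≤ z - l)]
      ring
    · rw [abs_of_nonpos h0] at hz ⊢
      have h1 := h (z + l)
      rw [abs_of_nonpos (by linarith : z + l ≤ (0:ℝ))] at h1
      have h2 := mul_le_mul_of_nonneg_left (neg_abs_le β) hl
      have h3 : (β - (z + l))^2 ≤ 0 := by nlinarith
      have h4 : β = z + l := by
        have := pow_eq_zero_iff (two_ne_zero) |>.1 (le_antisymm h3 (sq_nonneg _))
        linarith
      rw [h4, abs_of_nonpos (by linarith : z + l ≤ (0:ℝ))]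
      ring

lemma aux_sq {n : ℕ} {ι : Type*} [Fintype ι] [DecidableEq ι] (W : Fin n → ι → ℝ)
    (hW : ∀ a b, ∑ i, W i a * W i b = if a = b then 1 else 0) (y : Fin n → ℝ) (β : ι → ℝ) :
    sqnorm (fun i => y i - ∑ j, β j * W i j)
      = sqnorm y + ∑ j, (β j ^ 2 - 2 * (β j * ip y (fun i => W i j))) := by
  have e1 : ∑ i, y i * ∑ j, β j * W i j = ∑ j, β j * ip y (fun i => W i j) := by
    simp only [ip, Finset.mul_sum]
    rw [Finset.sum_comm]
    refine Finset.sum_congr rfl fun j _ => Finset.sum_congr rfl fun i _ => by ring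
  have e2 : ∑ i, (∑ j, β j * W i j) ^ 2 = ∑ j, β j ^ 2 := by
    have : ∀ i, (∑ j, β j * W i j) ^ 2 = ∑ j, ∑ m, β j * β m * (W i j * W i m) := by
      intro i
      rw [sq, Finset.sum_mul_sum]
      refine Finset.sum_congr rfl fun j _ => Finset.sum_congr rfl fun m _ => by ring
    simp only [this]
    rw [Finset.sum_comm]
    refine Finset.sum_congr rfl fun j _ => ?_
    rw [Finset.sum_comm]
    simp only [← Finset.mul_sum, hW]
    simp [sq]
  simp only [sqnorm, sub_sq, Finset.sum_add_distrib, Finset.sum_sub_distrib, e2, mul_assoc,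
    ← Finset.mul_sum, e1]
  ring

lemma aux_min {n : ℕ} {ι : Type*} [Fintype ι] [DecidableEq ι] (W : Fin n → ι → ℝ)
    (hW : ∀ a b, ∑ i, W i a * W i b = if a = b then 1 else 0) (y : Fin n → ℝ) (l : ℝ)
    (hl : 0 ≤ l) (β : ι → ℝ)
    (h : ∀ b : ι → ℝ, (1 / 2) * sqnorm (fun i => y i - ∑ j, β j * W i j) + l * ∑ j, |β j|
        ≤ (1 / 2) * sqnorm (fun i => y i - ∑ j, b j * W i j) + l * ∑ j, |b j|) :
    sqnorm (fun i => y i - ∑ j, β j * W i j) + l * ∑ j, |β j| = sqnorm y +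
      ∑ j, (if |ip y (fun i => W i j)| ≤ l then 0 else
        l * |ip y (fun i => W i j)| - (ip y (fun i => W i j))^2) := by
  have key : ∀ j, (β j)^2 - 2 * (β j * ip y (fun i => W i j)) + l * |β j| =
      if |ip y (fun i => W i j)| ≤ l then 0 else
        l * |ip y (fun i => W i j)| - (ip y (fun i => W i j))^2 := by
    intro j
    apply aux_one _ _ _ hl
    intro t
    have h1 := h (Function.update β j t)
    rw [aux_sq W hW, aux_sq W hW] at h1
    rw [← Finset.add_sum_erase _ _ (Finset.mem_univ j),
      ← Finset.add_sum_erase _ (fun j => |β j|) (Finset.mem_univ j),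
      ← Finset.add_sum_erase _ (fun m => (Function.update β j t m)^2 - _) (Finset.mem_univ j),
      ← Finset.add_sum_erase _ (fun m => |Function.update β j t m|) (Finset.mem_univ j)] at h1
    have e1 : ∑ m ∈ Finset.univ.erase j, ((Function.update β j t m)^2
        - 2 * (Function.update β j t m * ip y (fun i => W i m)))
        = ∑ m ∈ Finset.univ.erase j, ((β m)^2 - 2 * (β m * ip y (fun i => W i m))) := by
      refine Finset.sum_congr rfl fun m hm => ?_
      rw [Function.update_of_ne (Finset.ne_of_mem_erase hm)]
    have e2 : ∑ m ∈ Finset.univ.erase j, |Function.update β j t m|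
        = ∑ m ∈ Finset.univ.erase j, |β m| := by
      refine Finset.sum_congr rfl fun m hm => ?_
      rw [Function.update_of_ne (Finset.ne_of_mem_erase hm)]
    rw [e1, e2] at h1
    simp only [Function.update_self] at h1
    linarith
  rw [aux_sq W hW, add_assoc, Finset.mul_sum, ← Finset.sum_add_distrib]
  congr 1
  exact Finset.sum_congr rfl fun j _ => key j

lemma aux_top {p : ℕ} (f : Fin p → ℝ) (S T : Finset (Fin p)) (hc : T.card = S.card + 1)
    (hS : ∀ i ∈ S, ∀ j ∉ S, f j < f i) (hT : ∀ i ∈ T, ∀ j ∉ T, f j < f i)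
    (hne : T.Nonempty) : ∃ t, t ∉ S ∧ T = insert t S ∧ T.inf' hne f = f t := by
  have hsub : S ⊆ T := by
    intro s hs
    by_contra hsT
    obtain ⟨t, htT, htS⟩ : ∃ t ∈ T, t ∉ S := Finset.exists_mem_notMem_of_card_lt_card (by omega)
    exact lt_asymm (hT t htT s hsT) (hS s hs t htS)
  obtain ⟨t, htS, hts⟩ := (Finset.covBy_iff_exists_insert.1
    (Finset.covBy_iff_card_sdiff_eq_one.2 ⟨hsub, by rw [Finset.card_sdiff_of_subset hsub]; omega⟩))
  refine ⟨t, htS, hts.symm, le_antisymm (Finset.inf'_le _ (hts ▸ Finset.mem_insert_self _ _)) ?_⟩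
  apply Finset.le_inf'
  intro i hi
  rw [← hts, Finset.mem_insert] at hi
  rcases hi with rfl | hi
  · exact le_rfl
  · exact (hS i hi t htS).le

/-- Orthonormal design: the covariance test statistic at the `(k+1)`-st knot, comparing the
full Lasso at `λ = λ̂_{k+1}` with the Lasso restricted to the top-`(k−1)` set `Â_{k−1}`,
equals `(λ̂_k² − λ̂_k λ̂_{k+1})/σ²`. -/
theorem covariance_test_statistic_orthonormal
    {n p : ℕ} (X : Matrix (Fin n) (Fin p) ℝ)
    (horth : X.transpose * X = 1)
    (y : Fin n → ℝ) (σ : ℝ) (hσ : 0 < σ)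
    (z : Fin p → ℝ) (hz : z = fun j => ip y (fun i => X i j))
    (hdist : ∀ j k : Fin p, j ≠ k → |z j| ≠ |z k|)
    (k : ℕ) (hk1 : 1 ≤ k) (hkp : k + 1 ≤ p)
    (A B C : Finset (Fin p))
    (hAcard : A.card = k - 1) (hBcard : B.card = k) (hCcard : C.card = k + 1)
    (hA : ∀ i ∈ A, ∀ j ∉ A, |z j| < |z i|)
    (hB : ∀ i ∈ B, ∀ j ∉ B, |z j| < |z i|)
    (hC : ∀ i ∈ C, ∀ j ∉ C, |z j| < |z i|)
    (hBne : B.Nonempty) (hCne : C.Nonempty)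
    (lamk : ℝ) (hlamk : lamk = B.inf' hBne fun j => |z j|)
    (lamk1 : ℝ) (hlamk1 : lamk1 = C.inf' hCne fun j => |z j|)
    (βA : A → ℝ)
    (hβA : ∀ b : A → ℝ,
      (1 / 2) * sqnorm (fun i => y i - ∑ j : A, βA j * X i j.1) + lamk1 * ∑ j : A, |βA j|
        ≤ (1 / 2) * sqnorm (fun i => y i - ∑ j : A, b j * X i j.1) + lamk1 * ∑ j : A, |b j|)
    (βhat : Fin p → ℝ)
    (hβhat : ∀ β : Fin p → ℝ,
      (1 / 2) * sqnorm (fun i => y i - ∑ j, βhat j * X i j) + lamk1 * ∑ j, |βhat j|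
        ≤ (1 / 2) * sqnorm (fun i => y i - ∑ j, β j * X i j) + lamk1 * ∑ j, |β j|) :
    ((sqnorm (fun i => y i - ∑ j : A, βA j * X i j.1) + lamk1 * ∑ j : A, |βA j|)
      - (sqnorm (fun i => y i - ∑ j, βhat j * X i j) + lamk1 * ∑ j, |βhat j|)) / σ ^ 2
    = (lamk ^ 2 - lamk * lamk1) / σ ^ 2 := by
  have hW : ∀ a b, ∑ i, X i a * X i b = if a = b then 1 else 0 := by
    intro a b
    have := congrFun (congrFun horth a) b
    simpa [Matrix.mul_apply, Matrix.one_apply] using this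
  have hl : 0 ≤ lamk1 := by
    rw [hlamk1]
    exact Finset.le_inf' _ _ fun i _ => abs_nonneg _
  have hzj : ∀ j, ip y (fun i => X i j) = z j := fun j => by rw [hz]
  have m1 := aux_min (fun i j => X i j) hW y lamk1 hl βhat hβhat
  have m2 := aux_min (fun i (j : A) => X i j.1)
    (fun a b => (hW a.1 b.1).trans (if_congr Subtype.ext_iff.symm rfl rfl)) y lamk1 hl βA hβA
  rw [m1, m2]
  simp only [hzj]
  obtain ⟨b, hbA, hBA, hbinf⟩ := aux_top (fun j => |z j|) A B (by omega) hA hB hBne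
  obtain ⟨c, hcB, hCB, hcinf⟩ := aux_top (fun j => |z j|) B C (by omega) hB hC hCne
  rw [hbinf] at hlamk
  rw [hcinf] at hlamk1
  have hbB : b ∈ B := by rw [hBA]; exact Finset.mem_insert_self _ _
  have hcC : c ∈ C := by rw [hCB]; exact Finset.mem_insert_self _ _
  have hlt : ¬ |z b| ≤ lamk1 := by
    rw [hlamk1, not_le]; exact hB b hbB c hcB
  rw [Finset.sum_coe_sort A (fun j => if |z j| ≤ lamk1 then 0 else lamk1 * |z j| - z j ^ 2)]
  have hs : ∑ j, (if |z j| ≤ lamk1 then 0 else lamk1 * |z j| - z j ^ 2)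
      = ∑ j ∈ B, (if |z j| ≤ lamk1 then 0 else lamk1 * |z j| - z j ^ 2) := by
    symm
    apply Finset.sum_subset (Finset.subset_univ _)
    intro j _ hj
    rw [if_pos]
    rw [hlamk1]
    by_cases hjC : j ∈ C
    · rw [hCB, Finset.mem_insert] at hjC
      rcases hjC with rfl | h
      · exact le_rfl
      · exact absurd h hj
    · exact (hC c hcC j hjC).le
  rw [hs, hBA, Finset.sum_insert hbA, if_neg hlt]
  congr 1
  rw [hlamk, sq_abs]
  ring
end
end

section
/- Let X be an n×p real matrix with orthonormal columns (XᵀX = I_p), let y ∈ ℝ^n, σ > 0, and set z_j := ⟨y, X_j⟩. Assume the values |z_1|,…,|z_p| are pairwise distinct. For 1 ≤ k ≤ p, let λ̂_k be the k-th largest value among |z_1|,…,|z_p| and let Â_k ⊆ {1,…,p} be the set of indices of the k largest values of |z_j| (with Â_0 := ∅). Then for every 1 ≤ k ≤ p, the covariance test statistic vanishes at the knot: T(Â_{k−1}, λ̂_k) = 0. -/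
open scoped BigOperators

noncomputable section

theorem aux_expand {n p : ℕ} (X : Matrix (Fin n) (Fin p) ℝ)
    (horth : X.transpose * X = 1) (y : Fin n → ℝ) (β : Fin p → ℝ) :
    sqnorm (fun i => y i - ∑ j, β j * X i j)
      = sqnorm y + ∑ j, (β j ^ 2 - 2 * β j * ip y (fun i => X i j)) := by
  have h1 : ∑ i, (∑ j, β j * X i j) ^ 2 = ∑ j, β j ^ 2 := by
    have h2 : ∀ j l, ∑ i, X i j * X i l = if j = l then (1 : ℝ) else 0 := by
      intro j l
      have := congrFun (congrFun horth j) l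
      simpa [Matrix.mul_apply, Matrix.one_apply] using this
    calc ∑ i, (∑ j, β j * X i j) ^ 2
        = ∑ i, ∑ j, ∑ l, (β j * β l) * (X i j * X i l) := by
          refine Finset.sum_congr rfl fun i _ => ?_
          rw [sq, Finset.sum_mul_sum]
          refine Finset.sum_congr rfl fun j _ => Finset.sum_congr rfl fun l _ => by ring
      _ = ∑ j, ∑ l, (β j * β l) * ∑ i, (X i j * X i l) := by
          rw [Finset.sum_comm]
          refine Finset.sum_congr rfl fun j _ => ?_
          rw [Finset.sum_comm]
          simp_rw [Finset.mul_sum]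
      _ = ∑ j, β j ^ 2 := by
          simp [h2, sq]
  have h3 : ∑ i, y i * (∑ j, β j * X i j) = ∑ j, β j * ip y (fun i => X i j) := by
    simp only [ip, Finset.mul_sum]
    rw [Finset.sum_comm]
    refine Finset.sum_congr rfl fun j _ => Finset.sum_congr rfl fun l _ => by ring
  have h4 : ∑ j, (β j ^ 2 - 2 * β j * ip y (fun i => X i j))
      = ∑ j, β j ^ 2 - 2 * ∑ j, β j * ip y (fun i => X i j) := by
    rw [Finset.sum_sub_distrib, Finset.mul_sum]
    simp only [mul_assoc]
  rw [h4, ← h1, ← h3, Finset.mul_sum]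
  simp only [sqnorm]
  rw [← Finset.sum_sub_distrib, ← Finset.sum_add_distrib]
  refine Finset.sum_congr rfl fun i _ => by ring

theorem aux_sum {p : ℕ} (A : Finset (Fin p)) (g : Fin p → ℝ) (hg : ∀ j ∉ A, g j = 0) :
    ∑ j : A, g j.1 = ∑ j, g j := by
  rw [Finset.sum_coe_sort A g]
  exact Finset.sum_subset (Finset.subset_univ _) fun j _ hj => hg j hj

/-- Orthonormal design: the covariance test statistic vanishes at the knot,
`T(Â_{k−1}, λ̂_k) = 0`, where `Â_{k−1}` is the top-`(k−1)` set and `λ̂_k` the `k`-th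
largest value of `|z_j|`. -/
theorem covariance_test_statistic_vanishes_at_knot
    {n p : ℕ} (X : Matrix (Fin n) (Fin p) ℝ)
    (horth : X.transpose * X = 1)
    (y : Fin n → ℝ) (σ : ℝ) (hσ : 0 < σ)
    (z : Fin p → ℝ) (hz : z = fun j => ip y (fun i => X i j))
    (hdist : ∀ j k : Fin p, j ≠ k → |z j| ≠ |z k|)
    (k : ℕ) (hk1 : 1 ≤ k) (hkp : k ≤ p)
    (A B : Finset (Fin p))
    (hAcard : A.card = k - 1) (hBcard : B.card = k)
    (hA : ∀ i ∈ A, ∀ j ∉ A, |z j| < |z i|)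
    (hB : ∀ i ∈ B, ∀ j ∉ B, |z j| < |z i|)
    (hBne : B.Nonempty)
    (lamk : ℝ) (hlamk : lamk = B.inf' hBne fun j => |z j|)
    (βA : A → ℝ)
    (hβA : ∀ b : A → ℝ,
      (1 / 2) * sqnorm (fun i => y i - ∑ j : A, βA j * X i j.1) + lamk * ∑ j : A, |βA j|
        ≤ (1 / 2) * sqnorm (fun i => y i - ∑ j : A, b j * X i j.1) + lamk * ∑ j : A, |b j|)
    (βhat : Fin p → ℝ)
    (hβhat : ∀ β : Fin p → ℝ,
      (1 / 2) * sqnorm (fun i => y i - ∑ j, βhat j * X i j) + lamk * ∑ j, |βhat j|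
        ≤ (1 / 2) * sqnorm (fun i => y i - ∑ j, β j * X i j) + lamk * ∑ j, |β j|) :
    ((sqnorm (fun i => y i - ∑ j : A, βA j * X i j.1) + lamk * ∑ j : A, |βA j|)
      - (sqnorm (fun i => y i - ∑ j, βhat j * X i j) + lamk * ∑ j, |βhat j|)) / σ ^ 2
    = 0 := by
  have hlam : ∀ j ∉ A, |z j| ≤ lamk := by
    intro j hj
    rw [hlamk, Finset.le_inf'_iff]
    intro i hi
    by_contra hlt
    push Not at hlt
    have hjB : j ∈ B := by
      by_contra hjB
      exact absurd (hB i hi j hjB) (by linarith)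
    have hiA : i ∉ A := fun hiA => absurd (hA i hiA j hj) (by linarith)
    have hAB : A ⊆ B := by
      intro a ha
      by_contra haB
      have h1 := hA a ha i hiA
      have h2 := hB i hi a haB
      linarith
    have hc : (B \ A).card ≤ 1 := by
      rw [Finset.card_sdiff_of_subset hAB]; omega
    have hij := Finset.card_le_one.1 hc i (by simp [hi, hiA]) j (by simp [hjB, hj])
    rw [hij] at hlt
    exact lt_irrefl _ hlt
  have hl0 : 0 ≤ lamk := by
    rw [hlamk, Finset.le_inf'_iff]
    exact fun i _ => abs_nonneg _
  set f : ℝ → Fin p → ℝ := fun b j => (1 / 2) * (b ^ 2 - 2 * b * z j) + lamk * |b| with hf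
  have hobj : ∀ β : Fin p → ℝ, (1 / 2) * sqnorm (fun i => y i - ∑ j, β j * X i j)
      + lamk * ∑ j, |β j| = (1 / 2) * sqnorm y + ∑ j, f (β j) j := by
    intro β
    rw [aux_expand X horth, hf]
    simp only [Finset.sum_add_distrib, ← Finset.mul_sum, hz]
    ring
  have hmin : ∀ β : Fin p → ℝ, ∑ j, f (βhat j) j ≤ ∑ j, f (β j) j := by
    intro β
    have := hβhat β
    rw [hobj, hobj] at this
    linarith
  have hzero : ∀ j ∉ A, βhat j = 0 := by
    intro j hj
    have h := hmin (Function.update βhat j 0)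
    rw [← Finset.add_sum_erase _ _ (Finset.mem_univ j),
      ← Finset.add_sum_erase _ (fun l => f (Function.update βhat j 0 l) l) (Finset.mem_univ j)] at h
    have he : ∑ l ∈ Finset.univ.erase j, f (Function.update βhat j 0 l) l
        = ∑ l ∈ Finset.univ.erase j, f (βhat l) l := by
      refine Finset.sum_congr rfl fun l hl => ?_
      rw [Function.update_of_ne (Finset.ne_of_mem_erase hl)]
    rw [he] at h
    simp only [Function.update_self, hf, abs_zero] at h
    have h5 : βhat j * z j ≤ lamk * |βhat j| := by
      calc βhat j * z j ≤ |βhat j * z j| := le_abs_self _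
        _ = |z j| * |βhat j| := by rw [abs_mul, mul_comm]
        _ ≤ _ := mul_le_mul_of_nonneg_right (hlam j hj) (abs_nonneg _)
    have h6 : βhat j ^ 2 ≤ 0 := by linarith
    exact pow_eq_zero_iff two_ne_zero |>.1 (le_antisymm h6 (sq_nonneg _))
  -- extension of βA
  set β' : Fin p → ℝ := fun j => if h : j ∈ A then βA ⟨j, h⟩ else 0 with hβ'
  have hβ'A : ∀ j : A, βA j = β' j.1 := by
    intro j; simp [hβ']
  have hβ'0 : ∀ j ∉ A, β' j = 0 := by
    intro j hj; simp [hβ', hj]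
  have hsX : ∀ β : Fin p → ℝ, (∀ j ∉ A, β j = 0) → ∀ i,
      ∑ j : A, β j.1 * X i j.1 = ∑ j, β j * X i j := fun β h0 i =>
    aux_sum A (fun j => β j * X i j) fun j hj => by simp [h0 j hj]
  have hsa : ∀ β : Fin p → ℝ, (∀ j ∉ A, β j = 0) → 
      ∑ j : A, |β j.1| = ∑ j, |β j| := fun β h0 =>
    aux_sum A (fun j => |β j|) fun j hj => by simp [h0 j hj]
  have hA2 := hβA (fun j => βhat j.1)
  simp only [hβ'A] at hA2 ⊢
  simp only [hsX _ hzero, hsX _ hβ'0, hsa _ hzero, hsa _ hβ'0] at hA2 ⊢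
  rw [hobj, hobj] at hA2
  have hmid := hmin (fun j => (β' j + βhat j) / 2)
  have hbd : ∑ j, f ((β' j + βhat j) / 2) j ≤
      ∑ j, ((1 / 2) * f (β' j) j + (1 / 2) * f (βhat j) j - (1 / 8) * (β' j - βhat j) ^ 2) := by
    refine Finset.sum_le_sum fun j _ => ?_
    have h7 : |(β' j + βhat j) / 2| ≤ (|β' j| + |βhat j|) / 2 := by
      rw [abs_div, abs_two]
      have := abs_add_le (β' j) (βhat j)
      linarith
    have h8 := mul_le_mul_of_nonneg_left h7 hl0
    simp only [hf]
    nlinarith [h8]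
  clear_value f
  rw [Finset.sum_sub_distrib, Finset.sum_add_distrib, ← Finset.mul_sum, ← Finset.mul_sum,
    ← Finset.mul_sum] at hbd
  have h9 : ∑ j, (β' j - βhat j) ^ 2 = 0 :=
    le_antisymm (by linarith) (Finset.sum_nonneg fun j _ => sq_nonneg _)
  have h10 : β' = βhat := by
    funext j
    have := (Finset.sum_eq_zero_iff_of_nonneg (fun j _ => sq_nonneg _)).1 h9 j (Finset.mem_univ j)
    exact sub_eq_zero.1 (pow_eq_zero_iff two_ne_zero |>.1 this)
  rw [h10]
  simp
end
end
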